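/- Let Φ : ℝ → ℝ be continuous and supported on I_B, let γ > 0, and let (T_n)_{n∈ℕ} be a sequence of positive reals with T_n B / n → γ as n → ∞. Then Σ_{k=1}^n Σ_{ℓ=1}^n (B/n)² Φ(θ_k^{(n)}) Φ(θ_ℓ^{(n)}) f_{T_n}(θ_k^{(n)} − θ_ℓ^{(n)}) → (γ + ρ(γ)) ∫_{I_B} Φ(θ)² dθ as n → ∞. -/

import Mathlib

/-!
Put `h = B / n` and `γₙ = T n * h`. Since `h * f_T (h j) = f_{T h} (j)`, the double sum, reindexed by
the difference `j` of the two indices, equals `∑_{j ∈ ℤ} Aₙ(j) f_{γₙ}(j)`, where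
`Aₙ(j) = h ∑ₖ Φ(θₖ) Φ(θₖ + j h)` is a discrete autocorrelation; because `Φ` vanishes outside `I_B`
(and, by continuity, at its right endpoint) no boundary terms occur (`hasSum_double_sum`).

For fixed `j`, `Aₙ(j) → ∫ Φ²` by uniform continuity of `Φ` (`tendsto_autocorrelation`) and
`f_{γₙ}(j) → f_γ(j)`. As `|Aₙ(j)|` is bounded by `B sup |Φ|²` and `f_{γₙ}(j) = O(1 / j²)` uniformly
in `n`, dominated convergence for series gives the limit `(∫ Φ²) ∑_{j ∈ ℤ} f_γ(j)`. The last sum is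
`γ + ρ(γ)` by the Fourier expansion of the second Bernoulli polynomial (`hasSum_fejer`).
-/

open MeasureTheory Real Filter Topology

/-- The continuous-time Fejér kernel. -/
noncomputable def fejer (T θ : ℝ) : ℝ :=
  if θ = 0 then T
  else 2 * (1 - Real.cos (2 * Real.pi * θ * T)) / ((2 * Real.pi) ^ 2 * θ ^ 2 * T)

/-- `ρ(γ) = γ̆(1 − γ̆)/γ`, where `γ̆` is the fractional part of `γ`. -/
noncomputable def rho (γ : ℝ) : ℝ := Int.fract γ * (1 - Int.fract γ) / γ

/-- The uniform grid point `θ_k^{(n)} = θ_c + B(k − 1 − n/2)/n`, `k = 1, …, n`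
(here `k : Fin n` corresponds to the paper's index `k + 1`). -/
noncomputable def gridPoint (θc B : ℝ) (n : ℕ) (k : Fin n) : ℝ :=
  θc + B * (((k : ℕ) : ℝ) + 1 - 1 - (n : ℝ) / 2) / n

/-! ### The Fejér kernel on the integers -/

lemma fejer_neg (T x : ℝ) : fejer T (-x) = fejer T x := by
  simp [fejer]

lemma mul_fejer_mul {h : ℝ} (hh : 0 < h) (T x : ℝ) :
    h * fejer T (h * x) = fejer (T * h) x := by
  unfold fejer
  by_cases hx : x = 0
  · simp [hx, mul_comm]
  · rw [if_neg (mul_ne_zero hh.ne' hx), if_neg hx,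
      show 2 * π * (h * x) * T = 2 * π * x * (T * h) by ring]
    by_cases hT : T = 0
    · simp [hT]
    · field_simp

/-- The case `j ≠ 0` is covered by `1 / (γ j²)`, the case `j = 0` by the first summand
(as `1 / 0 = 0`). -/
lemma abs_fejer_int_le {γ g : ℝ} (hγ : 0 < γ) (h1 : γ / 2 ≤ g) (h2 : g ≤ 2 * γ) (j : ℤ) :
    |fejer g j| ≤ (if j = 0 then 2 * γ else 0) + 1 / γ * (1 / (j : ℝ) ^ 2) := by
  have hg : 0 < g := by linarith
  by_cases hj : j = 0
  · simp [hj, fejer, abs_of_pos hg, h2]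
  · have hj' : (j : ℝ) ≠ 0 := by exact_mod_cast hj
    have hj2 : 0 < (j : ℝ) ^ 2 := by positivity
    simp only [fejer, if_neg hj, if_neg hj', zero_add]
    have hc := Real.neg_one_le_cos (2 * π * j * g)
    have hc' := Real.cos_le_one (2 * π * j * g)
    have hpi : (8 : ℝ) ≤ (2 * π) ^ 2 := by nlinarith [Real.pi_gt_three]
    rw [abs_of_nonneg (div_nonneg (by linarith) (by positivity)), one_div_mul_one_div,
      div_le_div_iff₀ (by positivity) (by positivity)]
    calc 2 * (1 - Real.cos (2 * π * j * g)) * (γ * (j : ℝ) ^ 2)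
        ≤ 4 * (2 * g * (j : ℝ) ^ 2) := by
          gcongr <;> linarith
      _ = 8 * ((j : ℝ) ^ 2 * g) := by ring
      _ ≤ (2 * π) ^ 2 * ((j : ℝ) ^ 2 * g) := by gcongr
      _ = 1 * ((2 * π) ^ 2 * (j : ℝ) ^ 2 * g) := by ring

lemma tendsto_fejer {γ : ℝ} (hγ : 0 < γ) {g : ℕ → ℝ} (hg : Tendsto g atTop (𝓝 γ)) (x : ℝ) :
    Tendsto (fun n => fejer (g n) x) atTop (𝓝 (fejer γ x)) := by
  unfold fejer
  by_cases hx : x = 0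
  · simpa [hx] using hg
  · simp only [if_neg hx]
    refine Tendsto.div ?_ (hg.const_mul _) (by positivity)
    exact ((continuous_const.mul (continuous_const.sub (Real.continuous_cos.comp
      (continuous_const.mul continuous_id)))).tendsto γ).comp hg

lemma hasSum_fejer {γ : ℝ} (hγ : 0 < γ) :
    HasSum (fun j : ℤ => fejer γ j) (γ + rho γ) := by
  have hcos := hasSum_one_div_nat_pow_mul_cos one_ne_zero
    (x := Int.fract γ) ⟨Int.fract_nonneg _, (Int.fract_lt_one _).le⟩
  have hB : (Polynomial.map (algebraMap ℚ ℝ) (Polynomial.bernoulli (2 * 1))).eval (Int.fract γ)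
      = Int.fract γ ^ 2 - Int.fract γ + 6⁻¹ := bernoulliFun_two _
  rw [hB] at hcos
  have hnat := (hasSum_ite_eq (0 : ℕ) γ).add
    ((hasSum_zeta_two.sub hcos).mul_left (1 / (2 * π ^ 2 * γ)))
  have hfun : ∀ n : ℕ, (if n = 0 then γ else 0) + 1 / (2 * π ^ 2 * γ) * (1 / (n : ℝ) ^ 2 -
      1 / (n : ℝ) ^ (2 * 1) * Real.cos (2 * π * n * Int.fract γ)) = fejer γ ((n : ℤ) : ℝ) := by
    intro n
    by_cases hn : n = 0
    · simp [hn, fejer]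
    · have hn' : (n : ℝ) ≠ 0 := by exact_mod_cast hn
      have hc : Real.cos (2 * π * n * Int.fract γ) = Real.cos (2 * π * n * γ) := by
        rw [← Real.cos_sub_int_mul_two_pi (2 * π * n * γ) (n * ⌊γ⌋)]
        congr 1
        push_cast
        rw [← Int.self_sub_floor]
        ring
      rw [hc]
      simp only [fejer, if_neg hn, Int.cast_natCast, if_neg hn']
      field_simp
      ring
  simp only [hfun] at hnat
  have heven : ∀ n : ℕ, fejer γ ((n : ℤ) : ℝ) = fejer γ ((-(n : ℤ) : ℤ) : ℝ) := fun n => by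
    rw [Int.cast_neg, fejer_neg]
  have hneg := hnat
  rw [funext heven] at hneg
  convert! HasSum.of_nat_of_neg (f := fun j : ℤ => fejer γ j) hnat hneg using 1
  simp only [rho, fejer, Int.cast_zero, if_true]
  norm_num
  field_simp
  ring

/-! ### The discrete autocorrelation -/

/-- The points `a + k B / n` for an integer `k`; with `a` the left endpoint of the interval
they extend the grid to the whole line. -/
noncomputable def latticePoint (a B : ℝ) (n : ℕ) (k : ℤ) : ℝ := a + k * (B / n)

lemma gridPoint_eq (θc B : ℝ) {n : ℕ} (hn : 0 < n) (k : Fin n) :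
    gridPoint θc B n k = latticePoint (θc - B / 2) B n ((k : ℕ) : ℤ) := by
  have : (n : ℝ) ≠ 0 := by positivity
  simp only [gridPoint, latticePoint, Int.cast_natCast]
  field_simp
  ring

/-- The discrete autocorrelation of `Φ` at lag `j` on the grid with step `B / n`. -/
noncomputable def autocorrelation (Φ : ℝ → ℝ) (a B : ℝ) (n : ℕ) (j : ℤ) : ℝ :=
  ∑ k ∈ Finset.range n, B / n * (Φ (latticePoint a B n k) * Φ (latticePoint a B n (k + j)))

lemma abs_autocorrelation_le {Φ : ℝ → ℝ} {M B : ℝ} (hB : 0 < B) (hM : ∀ x, |Φ x| ≤ M)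
    (a : ℝ) {n : ℕ} (hn : 0 < n) (j : ℤ) : |autocorrelation Φ a B n j| ≤ B * M ^ 2 := by
  have hM0 : 0 ≤ M := (abs_nonneg _).trans (hM 0)
  have hn' : (n : ℝ) ≠ 0 := by positivity
  calc |autocorrelation Φ a B n j|
      ≤ ∑ k ∈ Finset.range n, B / n * M ^ 2 := by
        refine (Finset.abs_sum_le_sum_abs _ _).trans (Finset.sum_le_sum fun k _ => ?_)
        rw [abs_mul, abs_mul, abs_of_pos (by positivity : 0 < B / n), sq]
        gcongr <;> apply hM
    _ = B * M ^ 2 := by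
        simp only [Finset.sum_const, Finset.card_range, nsmul_eq_mul]
        field_simp

/-- At each fixed lag the autocorrelation is asymptotically a Riemann sum of `Φ²`. -/
lemma tendsto_autocorrelation {Φ : ℝ → ℝ} {M B : ℝ} (hB : 0 < B) (hM : ∀ x, |Φ x| ≤ M)
    (hΦ : UniformContinuous Φ) (a : ℝ) (j : ℤ) :
    Tendsto (fun n => autocorrelation Φ a B n j) atTop (𝓝 (∫ x in a..(a + B), Φ x ^ 2)) := by
  have hM0 : 0 ≤ M := (abs_nonneg _).trans (hM 0)
  have hc : Continuous fun x => Φ x ^ 2 := hΦ.continuous.pow 2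
  rw [Metric.tendsto_atTop']
  intro ε hε
  set η := ε / (4 * B * (M + 1)) with hη
  have hη0 : 0 < η := by positivity
  obtain ⟨δ, hδ, hΦδ⟩ := Metric.uniformContinuous_iff.1 hΦ η hη0
  -- Any two points of `[θₖ, θₖ₊₁] ∪ {θₖ + j h}` are at distance at most `(|j| + 1) h`.
  obtain ⟨N, hN⟩ := exists_nat_gt ((|(j : ℝ)| + 1) * B / δ)
  refine ⟨N, fun n hn => ?_⟩
  have hn0 : 0 < n := by omega
  have hnR : (0 : ℝ) < n := by positivity
  set h := B / n with hh
  have hh0 : 0 < h := by positivity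
  have hδh : (|(j : ℝ)| + 1) * h < δ := by
    rw [hh, ← mul_div_assoc, div_lt_iff₀ hnR, mul_comm δ, ← div_lt_iff₀ hδ]
    exact hN.trans (by exact_mod_cast hn)
  have hsplit : ∫ x in a..(a + B), Φ x ^ 2 = ∑ k ∈ Finset.range n,
      ∫ x in (a + (k : ℕ) * h)..(a + ((k + 1 : ℕ) : ℝ) * h), Φ x ^ 2 := by
    rw [intervalIntegral.sum_integral_adjacent_intervals (a := fun k : ℕ => a + k * h)
      (fun k _ => hc.intervalIntegrable _ _)]
    congr 1
    · simp
    · rw [hh]; field_simp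
  have hterm : ∀ k ∈ Finset.range n,
      |h * (Φ (latticePoint a B n k) * Φ (latticePoint a B n (k + j))) -
        ∫ x in (a + (k : ℕ) * h)..(a + ((k + 1 : ℕ) : ℝ) * h), Φ x ^ 2| ≤ 2 * M * η * h := by
    intro k _
    set p := latticePoint a B n k with hp
    set q := latticePoint a B n (k + j) with hq
    have hp' : p = a + k * h := by simp [hp, latticePoint, hh]
    have hq' : q = a + (k + j) * h := by simp [hq, latticePoint, hh]
    have hlen : a + ((k + 1 : ℕ) : ℝ) * h - (a + (k : ℕ) * h) = h := by push_cast; ring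
    have hconst : h * (Φ p * Φ q) =
        ∫ _ in (a + (k : ℕ) * h)..(a + ((k + 1 : ℕ) : ℝ) * h), Φ p * Φ q := by
      rw [intervalIntegral.integral_const, hlen, smul_eq_mul]
    rw [hconst, ← intervalIntegral.integral_sub (by simp) (hc.intervalIntegrable _ _)]
    have := intervalIntegral.norm_integral_le_of_norm_le_const
      (a := a + (k : ℕ) * h) (b := a + ((k + 1 : ℕ) : ℝ) * h) (C := 2 * M * η)
      (f := fun x => Φ p * Φ q - Φ x ^ 2) ?_
    · rwa [hlen, abs_of_pos hh0, Real.norm_eq_abs] at this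
    intro x hx
    rw [Set.uIoc_of_le (by linarith)] at hx
    have hx1 : 0 ≤ x - p := by rw [hp']; linarith [hx.1]
    have hx2 : x - p ≤ h := by rw [hp']; linarith [hx.2]
    have hqp : q - p = j * h := by rw [hp', hq']; ring
    have hjh : |(j : ℝ) * h| = |(j : ℝ)| * h := by rw [abs_mul, abs_of_pos hh0]
    have hj0 : 0 ≤ |(j : ℝ)| * h := by positivity
    have h1 : |Φ p - Φ x| ≤ η := by
      refine (hΦδ (a := p) (b := x) ?_).le
      rw [dist_comm, Real.dist_eq, abs_of_nonneg hx1]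
      linarith
    have h2 : |Φ q - Φ x| ≤ η := by
      refine (hΦδ (a := q) (b := x) ?_).le
      rw [Real.dist_eq, show q - x = j * h - (x - p) by rw [← hqp]; ring]
      refine (abs_sub _ _).trans_lt ?_
      rw [hjh, abs_of_nonneg hx1]
      linarith
    calc ‖Φ p * Φ q - Φ x ^ 2‖ = |Φ p * (Φ q - Φ x) + Φ x * (Φ p - Φ x)| := by
          rw [Real.norm_eq_abs]; congr 1; ring
      _ ≤ |Φ p| * |Φ q - Φ x| + |Φ x| * |Φ p - Φ x| := by
          simpa only [abs_mul] using abs_add_le (Φ p * (Φ q - Φ x)) (Φ x * (Φ p - Φ x))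
      _ ≤ M * η + M * η := by gcongr <;> apply hM
      _ = 2 * M * η := by ring
  rw [Real.dist_eq, hsplit, autocorrelation, ← Finset.sum_sub_distrib]
  calc _ ≤ ∑ k ∈ Finset.range n, 2 * M * η * h :=
        (Finset.abs_sum_le_sum_abs _ _).trans (Finset.sum_le_sum hterm)
    _ = 2 * M * η * B := by
        simp only [Finset.sum_const, Finset.card_range, nsmul_eq_mul, hh]
        field_simp
    _ < ε := by
        rw [hη, ← mul_div_assoc, div_mul_eq_mul_div, div_lt_iff₀ (by positivity)]
        nlinarith [mul_pos hε hB, mul_nonneg (mul_pos hε hB).le hM0]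

/-! ### The double sum as a series over the lag -/

/-- The double sum as a series over the lag `j`. Since `Φ` vanishes off
`[θc - B / 2, θc + B / 2)`, the lag `l - k` may run over all integers. -/
lemma hasSum_double_sum {θc B : ℝ} (hB : 0 < B) {Φ : ℝ → ℝ}
    (hl : ∀ x < θc - B / 2, Φ x = 0) (hr : ∀ x, θc - B / 2 + B ≤ x → Φ x = 0) (T : ℝ)
    {n : ℕ} (hn : 0 < n) :
    HasSum (fun j : ℤ => autocorrelation Φ (θc - B / 2) B n j * fejer (T * B / n) j)
      (∑ k : Fin n, ∑ l : Fin n,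
          (B / n) ^ 2 * Φ (gridPoint θc B n k) * Φ (gridPoint θc B n l) *
            fejer T (gridPoint θc B n k - gridPoint θc B n l)) := by
  have hnR : (0 : ℝ) < n := by positivity
  have hh0 : 0 < B / n := by positivity
  set P := latticePoint (θc - B / 2) B n with hP
  have hvanish : ∀ m : ℤ, m < 0 ∨ (n : ℤ) ≤ m → Φ (P m) = 0 := by
    rintro m (hm | hm)
    · apply hl
      have : (m : ℝ) < 0 := by exact_mod_cast hm
      have := mul_neg_of_neg_of_pos this hh0
      simp only [hP, latticePoint]
      linarith
    · apply hr
      have hm' : (n : ℝ) ≤ m := by exact_mod_cast hm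
      have h1 := mul_le_mul_of_nonneg_right hm' hh0.le
      rw [mul_div_cancel₀ _ hnR.ne'] at h1
      simp only [hP, latticePoint]
      linarith
  have hrow : ∀ k : Fin n, HasSum
      (fun j : ℤ => B / n * (Φ (P (k : ℕ)) * Φ (P ((k : ℕ) + j))) * fejer (T * B / n) j)
      (∑ l : Fin n, (B / n) ^ 2 * Φ (gridPoint θc B n k) * Φ (gridPoint θc B n l) *
            fejer T (gridPoint θc B n k - gridPoint θc B n l)) := by
    intro k
    have hinj : Function.Injective fun l : Fin n => ((l : ℕ) : ℤ) - (k : ℕ) := by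
      intro l m hlm
      ext
      have : ((l : ℕ) : ℤ) - (k : ℕ) = ((m : ℕ) : ℤ) - (k : ℕ) := hlm
      omega
    refine (hinj.hasSum_iff fun j hj => ?_).1 ?_
    · rw [hvanish ((k : ℕ) + j), mul_zero, mul_zero, zero_mul]
      by_contra! hcon
      refine hj ⟨⟨((k : ℕ) + j).toNat, by omega⟩, ?_⟩
      simp only
      omega
    · convert hasSum_fintype _ using 1
      refine Finset.sum_congr rfl fun l _ => ?_
      simp only [Function.comp]
      rw [gridPoint_eq θc B hn, gridPoint_eq θc B hn, ← hP, add_sub_cancel, mul_div_assoc,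
        ← mul_fejer_mul hh0, ← fejer_neg T (B / n * _)]
      have : P (k : ℕ) - P (l : ℕ) = -(B / n * (((l : ℕ) : ℤ) - (k : ℕ) : ℤ)) := by
        simp only [hP, latticePoint]
        push_cast
        ring
      rw [this]
      ring
  convert hasSum_sum fun k (_ : k ∈ Finset.univ) => hrow k using 1
  funext j
  rw [autocorrelation, ← Finset.sum_mul, Finset.sum_range]

/-- convergence of the discretized double Fejér sum to
`(γ + ρ(γ)) ∫_{I_B} Φ(θ)² dθ` when `T_n B / n → γ`. -/
theorem double_fejer_sum_limit
    (θc B : ℝ) (hB : 0 < B) (Φ : ℝ → ℝ)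
    (hΦc : Continuous Φ) (hΦ0 : ∀ θ, 0 ≤ Φ θ)
    (hsupp : Function.support Φ ⊆ Set.Icc (θc - B / 2) (θc + B / 2))
    (γ : ℝ) (hγ : 0 < γ) (T : ℕ → ℝ) (hT : ∀ n, 0 < T n)
    (hTγ : Tendsto (fun n : ℕ => T n * B / n) atTop (𝓝 γ)) :
    Tendsto (fun n : ℕ =>
        ∑ k : Fin n, ∑ l : Fin n,
          (B / n) ^ 2 * Φ (gridPoint θc B n k) * Φ (gridPoint θc B n l) *
            fejer (T n) (gridPoint θc B n k - gridPoint θc B n l))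
      atTop
      (𝓝 ((γ + rho γ) * ∫ θ in Set.Icc (θc - B / 2) (θc + B / 2), (Φ θ) ^ 2)) := by
  have hout : ∀ x, x ∉ Set.Icc (θc - B / 2) (θc + B / 2) → Φ x = 0 := fun x hx => by
    by_contra h
    exact hx (hsupp h)
  have hcs : HasCompactSupport Φ := HasCompactSupport.intro isCompact_Icc fun x hx => hout x hx
  obtain ⟨M, hM⟩ := hcs.exists_bound_of_continuous hΦc
  have hM' : ∀ x, |Φ x| ≤ M := hM
  have hl : ∀ x < θc - B / 2, Φ x = 0 := fun x hx => hout x fun h => absurd h.1 (not_le.2 hx)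
  -- The support condition allows the right endpoint; there `Φ = 0` by continuity.
  have hr : ∀ x, θc - B / 2 + B ≤ x → Φ x = 0 := by
    have hcl : IsClosed {x | Φ x = 0} := isClosed_eq hΦc continuous_const
    have hsub : Set.Ioi (θc - B / 2 + B) ⊆ {x | Φ x = 0} := fun x hx =>
      hout x fun h => absurd h.2 (not_le.2 (by have := Set.mem_Ioi.1 hx; linarith))
    have := hcl.closure_subset_iff.2 hsub
    rw [closure_Ioi] at this
    exact fun x hx => this hx
  have hint : ∫ θ in Set.Icc (θc - B / 2) (θc + B / 2), Φ θ ^ 2 =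
      ∫ x in (θc - B / 2)..(θc - B / 2 + B), Φ x ^ 2 := by
    rw [intervalIntegral.integral_of_le (by linarith), integral_Icc_eq_integral_Ioc]
    congr 3
    ring
  have hlim : Tendsto (fun n : ℕ => ∑' j : ℤ,
      autocorrelation Φ (θc - B / 2) B n j * fejer (T n * B / n) j) atTop
      (𝓝 (∑' j : ℤ, (∫ x in (θc - B / 2)..(θc - B / 2 + B), Φ x ^ 2) * fejer γ j)) := by
    refine tendsto_tsum_of_dominated_convergence
      (bound := fun j : ℤ => B * M ^ 2 *
        ((if j = 0 then 2 * γ else 0) + 1 / γ * (1 / (j : ℝ) ^ 2))) ?_ ?_ ?_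
    · exact (((hasSum_ite_eq (0 : ℤ) (2 * γ)).summable).add
        ((Real.summable_one_div_int_pow.2 one_lt_two).mul_left _)).mul_left _
    · exact fun j => (tendsto_autocorrelation hB hM'
        (hcs.uniformContinuous_of_continuous hΦc) _ j).mul (tendsto_fejer hγ hTγ _)
    · filter_upwards [eventually_gt_atTop 0, hTγ.eventually_const_le (half_lt_self hγ),
        hTγ.eventually_le_const (by linarith : γ < 2 * γ)] with n hn h1 h2 j
      rw [Real.norm_eq_abs, abs_mul]
      gcongr
      · exact abs_autocorrelation_le hB hM' _ hn j
      · exact abs_fejer_int_le hγ h1 h2 j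
  rw [tsum_mul_left, (hasSum_fejer hγ).tsum_eq, mul_comm, ← hint] at hlim
  refine hlim.congr' ?_
  filter_upwards [eventually_gt_atTop 0] with n hn
  exact (hasSum_double_sum hB hl hr (T n) hn).tsum_eq
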